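/- arXiv:1802.09308 — 4 statements merged into one kernel-verified Lean document; each statement's English description precedes it below -/
import Mathlib

section
/- Let m be a real number and s > 0. If the real random variable X has the Gaussian distribution N(m, s²), then the expectation of |X| equals s·√(2/π)·exp(−m²/(2s²)) + m·(1 − 2Φ(−m/s)), where Φ denotes the standard normal cumulative distribution function. -/
open MeasureTheory ProbabilityTheory Real
open scoped NNReal

/-- The standard normal cumulative distribution function `Φ(t) = P(Z ≤ t)`
for `Z ~ N(0,1)`. -/
noncomputable def stdNormalCDF (t : ℝ) : ℝ :=
  (gaussianReal 0 1 (Set.Iic t)).toReal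

theorem aux_hasDeriv (x : ℝ) :
    HasDerivAt (fun y => -gaussianPDFReal 0 1 y) (gaussianPDFReal 0 1 x * x) x := by
  have h1 : HasDerivAt (fun y : ℝ => -(y - 0) ^ 2 / (2 * ((1 : ℝ≥0) : ℝ))) (-x) x := by
    have := ((((hasDerivAt_id x).sub_const (0 : ℝ)).pow 2).neg).div_const (2 * ((1 : ℝ≥0) : ℝ))
    refine this.congr_deriv ?_
    simp
    ring
  have h2 := ((h1.exp).const_mul ((√(2 * π * ((1 : ℝ≥0) : ℝ)))⁻¹)).neg
  refine h2.congr_deriv ?_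
  simp only [gaussianPDFReal]
  ring

theorem aux_integrable : Integrable (fun x : ℝ => gaussianPDFReal 0 1 x * x) := by
  have h := (integrable_mul_exp_neg_mul_sq (b := 1 / 2) (by norm_num)).const_mul
    ((√(2 * π * ((1 : ℝ≥0) : ℝ)))⁻¹)
  refine h.congr (Filter.Eventually.of_forall fun x => ?_)
  simp only [gaussianPDFReal, NNReal.coe_one]
  rw [show -(x - 0) ^ 2 / (2 * 1) = -(1 / 2) * x ^ 2 by ring]
  ring

theorem aux_tendsto : Filter.Tendsto (fun y => -gaussianPDFReal 0 1 y) Filter.atBot (nhds 0) := by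
  have h1 : Filter.Tendsto (fun y : ℝ => -(y ^ 2 / 2)) Filter.atBot Filter.atBot := by
    apply Filter.tendsto_neg_atTop_atBot.comp
    apply Filter.Tendsto.atTop_div_const (by norm_num)
    have : (fun y : ℝ => y ^ 2) = (fun y : ℝ => y ^ 2) ∘ (fun y => -y) := by ext; simp
    rw [this]
    exact (Filter.tendsto_pow_atTop (by norm_num)).comp Filter.tendsto_neg_atBot_atTop
  have h2 := ((tendsto_exp_atBot.comp h1).const_mul ((√(2 * π * ((1 : ℝ≥0) : ℝ)))⁻¹)).neg
  rw [mul_zero, neg_zero] at h2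
  refine h2.congr fun x => ?_
  simp only [gaussianPDFReal, NNReal.coe_one, Function.comp]
  rw [show -(x - 0) ^ 2 / (2 * 1) = -(x ^ 2 / 2) by ring]

theorem aux_setIntegral (a : ℝ) :
    ∫ x in Set.Iic a, x ∂(gaussianReal 0 1) = -gaussianPDFReal 0 1 a := by
  rw [← integral_indicator measurableSet_Iic,
    integral_gaussianReal_eq_integral_smul one_ne_zero]
  have : ∀ x, gaussianPDFReal 0 1 x • (Set.Iic a).indicator (fun x : ℝ => x) x
      = (Set.Iic a).indicator (fun x => gaussianPDFReal 0 1 x * x) x := by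
    intro x
    by_cases h : x ∈ Set.Iic a <;> simp [h, Set.indicator]
  simp_rw [this]
  rw [integral_indicator measurableSet_Iic,
    integral_Iic_of_hasDerivAt_of_tendsto' (fun x _ => aux_hasDeriv x)
      aux_integrable.integrableOn aux_tendsto, sub_zero]

/-- If `X ~ N(m, s²)` then
`E|X| = s·√(2/π)·exp(−m²/(2s²)) + m·(1 − 2Φ(−m/s))`. -/
theorem abs_expectation_gaussian (m s : ℝ) (hs : 0 < s) :
    ∫ x, |x| ∂(gaussianReal m ⟨s ^ 2, sq_nonneg s⟩) =
      s * Real.sqrt (2 / π) * Real.exp (-(m ^ 2) / (2 * s ^ 2)) +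
        m * (1 - 2 * stdNormalCDF (-(m / s))) := by
  have hmap : gaussianReal m ⟨s ^ 2, sq_nonneg s⟩
      = (gaussianReal 0 1).map (fun z => m + s * z) := by
    have h1 : (fun z : ℝ => m + s * z) = (fun z => m + z) ∘ (fun z => s * z) := rfl
    rw [h1, ← Measure.map_map (by fun_prop) (by fun_prop), gaussianReal_map_const_mul,
      gaussianReal_map_const_add]
    simp
    rfl
  have hid : Integrable (fun z : ℝ => z) (gaussianReal 0 1) :=
    (memLp_id_gaussianReal 1).integrable (by simp)
  have hlin : Integrable (fun z : ℝ => m + s * z) (gaussianReal 0 1) :=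
    (integrable_const m).add (hid.const_mul s)
  rw [hmap, integral_map (by fun_prop) (by fun_prop)]
  have habs : ∀ z : ℝ, |m + s * z| = (m + s * z)
      - 2 * (Set.Iic (-(m / s))).indicator (fun z => m + s * z) z := by
    intro z
    have key : z ≤ -(m / s) ↔ m + s * z ≤ 0 := by
      rw [← neg_div, le_div_iff₀ hs]
      constructor <;> intro h <;> linarith
    by_cases h : z ≤ -(m / s)
    · rw [Set.indicator_of_mem (Set.mem_Iic.2 h), abs_of_nonpos (key.1 h)]
      ring
    · rw [Set.indicator_of_notMem (by simpa using h), abs_of_pos (not_le.1 (fun h' => h (key.2 h')))]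
      ring
  simp_rw [habs]
  rw [integral_sub hlin ((hlin.indicator measurableSet_Iic).const_mul 2), integral_const_mul,
    integral_indicator measurableSet_Iic,
    integral_add (integrable_const m) (hid.const_mul s),
    integral_add (integrable_const m) (hid.const_mul s).integrableOn,
    integral_const_mul, integral_const_mul, aux_setIntegral, integral_id_gaussianReal]
  have hexp : gaussianPDFReal 0 1 (-(m / s))
      = (√(2 * π))⁻¹ * Real.exp (-(m ^ 2) / (2 * s ^ 2)) := by
    simp only [gaussianPDFReal, NNReal.coe_one, mul_one]
    congr 2
    field_simp
    ring
  have hsq : √(2 / π) = 2 * (√(2 * π))⁻¹ := by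
    have h2 : √(2 * π) ≠ 0 := by positivity
    rw [eq_mul_inv_iff_mul_eq₀ h2, ← Real.sqrt_mul (by positivity),
      show 2 / π * (2 * π) = 2 ^ 2 by field_simp]
    exact Real.sqrt_sq (by norm_num)
  rw [hexp, hsq]
  simp only [integral_const, stdNormalCDF, Measure.real, Measure.restrict_apply_univ,
    measure_univ, smul_eq_mul, ENNReal.toReal_one]
  ring
end

section
/- The function h : [0, ∞) → ℝ defined by h(Δ) = √(2/π)·exp(−Δ²/8) − Δ·Φ(−Δ/2) is monotone nonincreasing on [0, ∞) and tends to 0 as Δ → ∞. Here Φ is the standard normal cumulative distribution function. -/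
open MeasureTheory ProbabilityTheory Filter

/-- `h(Δ) = √(2/π)·exp(−Δ²/8) − Δ·Φ(−Δ/2)`, the gap `D(Δ) − Δ/2` between the
expected distance to the LDA decision boundary and its linear approximation. -/
noncomputable def h (Δ : ℝ) : ℝ :=
  Real.sqrt (2 / Real.pi) * Real.exp (-Δ ^ 2 / 8) - Δ * stdNormalCDF (-(Δ / 2))

lemma stdNormalCDF_eq (t : ℝ) :
    stdNormalCDF t = stdNormalCDF 0 + ∫ x in (0:ℝ)..t, gaussianPDFReal 0 1 x := by
  have e : ∀ s, stdNormalCDF s = ∫ x in Set.Iic s, gaussianPDFReal 0 1 x := by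
    intro s
    rw [stdNormalCDF, gaussianReal_apply_eq_integral 0 one_ne_zero, ENNReal.toReal_ofReal]
    exact integral_nonneg fun x => gaussianPDFReal_nonneg _ _ _
  rw [e, e, ← intervalIntegral.integral_Iic_sub_Iic
    (integrable_gaussianPDFReal 0 1).integrableOn (integrable_gaussianPDFReal 0 1).integrableOn]
  ring

lemma hasDerivAt_stdNormalCDF (t : ℝ) :
    HasDerivAt stdNormalCDF (gaussianPDFReal 0 1 t) t := by
  have hc : Continuous (gaussianPDFReal 0 1) := by
    rw [gaussianPDFReal_def]; fun_prop
  have := (intervalIntegral.integral_hasDerivAt_right (hc.intervalIntegrable 0 t)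
    (hc.stronglyMeasurableAtFilter _ _) hc.continuousAt).const_add (stdNormalCDF 0)
  exact this.congr_of_eventuallyEq (Eventually.of_forall stdNormalCDF_eq)

lemma hasDerivAt_h (x : ℝ) : HasDerivAt h (-stdNormalCDF (-(x / 2))) x := by
  have hin : HasDerivAt (fun y : ℝ => -(y / 2)) (-(1 / 2)) x :=
    ((hasDerivAt_id x).div_const 2).neg
  have h1 := (hasDerivAt_stdNormalCDF (-(x / 2))).comp x hin
  have h2 := (hasDerivAt_id x).mul h1
  have h3 : HasDerivAt (fun y : ℝ => -y ^ 2 / 8) (-(2 * x) / 8) x := by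
    have := ((hasDerivAt_pow 2 x).neg).div_const 8
    simpa using this
  have h4 := (h3.exp.const_mul (Real.sqrt (2 / Real.pi))).sub h2
  refine h4.congr_deriv ?_
  have hs : Real.sqrt (2 / Real.pi) = 2 * (Real.sqrt (2 * Real.pi))⁻¹ := by
    have : (2 / Real.pi) = 2 ^ 2 / (2 * Real.pi) := by field_simp
    rw [this, Real.sqrt_div (by norm_num), Real.sqrt_sq (by norm_num)]
    rfl
  have he : -(-(x / 2) - 0) ^ 2 / (2 * ((1 : NNReal) : ℝ)) = -x ^ 2 / 8 := by
    push_cast; ring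
  rw [gaussianPDFReal, he, hs]
  simp
  ring

lemma stdNormalCDF_nonneg (t : ℝ) : 0 ≤ stdNormalCDF t := ENNReal.toReal_nonneg

lemma stdNormalCDF_le (t : ℝ) (ht : 0 < t) : stdNormalCDF (-t) ≤ 1 / t ^ 2 := by
  have := meas_ge_le_variance_div_sq (μ := gaussianReal 0 1) (X := id)
    (memLp_id_gaussianReal' 2 (by simp)) ht
  have h2 : gaussianReal 0 1 (Set.Iic (-t)) ≤ ENNReal.ofReal (1 / t ^ 2) := by
    refine (measure_mono ?_).trans (this.trans_eq ?_)
    · intro x hx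
      simp only [Set.mem_Iic] at hx
      simp only [id, integral_id_gaussianReal, sub_zero, Set.mem_ofPred_eq]
      exact le_abs.2 (Or.inr (by linarith))
    · simp [variance_id_gaussianReal]
  exact ENNReal.toReal_le_of_le_ofReal (by positivity) h2

/-- `h` is monotone nonincreasing on `[0, ∞)` and tends to `0` as `Δ → ∞`. -/
theorem h_antitoneOn_and_tendsto_zero :
    AntitoneOn h (Set.Ici 0) ∧ Tendsto h atTop (nhds 0) := by
  constructor
  · refine (antitone_of_deriv_nonpos (fun x => (hasDerivAt_h x).differentiableAt) ?_).antitoneOn _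
    intro x
    rw [(hasDerivAt_h x).deriv]
    linarith [stdNormalCDF_nonneg (-(x / 2))]
  · have t1 : Tendsto (fun x : ℝ => Real.exp (-x ^ 2 / 8)) atTop (nhds 0) := by
      refine Real.tendsto_exp_atBot.comp ?_
      have : Tendsto (fun x : ℝ => x ^ 2 / 8) atTop atTop :=
        (tendsto_pow_atTop two_ne_zero).atTop_div_const (by norm_num)
      refine (tendsto_neg_atTop_atBot.comp this).congr fun x => ?_
      simp only [Function.comp]; ring
    have t2 : Tendsto (fun x : ℝ => x * stdNormalCDF (-(x / 2))) atTop (nhds 0) := by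
      have t3 : Tendsto (fun x : ℝ => 4 / x) atTop (nhds 0) := tendsto_const_nhds.div_atTop tendsto_id
      refine squeeze_zero' ?_ ?_ t3
      · filter_upwards [eventually_ge_atTop 0] with x hx
        exact mul_nonneg hx (stdNormalCDF_nonneg _)
      · filter_upwards [eventually_gt_atTop 0] with x hx
        calc x * stdNormalCDF (-(x / 2)) ≤ x * (1 / (x / 2) ^ 2) :=
              mul_le_mul_of_nonneg_left (stdNormalCDF_le _ (by positivity)) hx.le
          _ = 4 / x := by field_simp; norm_num
    have := (t1.const_mul (Real.sqrt (2 / Real.pi))).sub t2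
    rw [mul_zero, sub_zero] at this
    exact this
end

section
/- Let L ≥ 2, let C > 0, and let μ₁, …, μ_L be vectors in a real inner product space satisfying Σ_{i=1}^{L} μᵢ = 0 and ‖μᵢ‖² ≤ C for every i. Then min_{i ≠ j} ‖μᵢ − μⱼ‖ / 2 ≤ √(LC / (2(L−1))); equivalently, there exist indices i ≠ j with ‖μᵢ − μⱼ‖² ≤ 2LC/(L−1). -/
/-- Let `L ≥ 2`, `C > 0` and `μ₁, …, μ_L` be vectors in a real inner product
space with `Σᵢ μᵢ = 0` and `‖μᵢ‖² ≤ C` for every `i`. Then the approximated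
robustness `min_{i≠j} ‖μᵢ − μⱼ‖/2` is at most `√(LC/(2(L−1)))`; equivalently,
there exist `i ≠ j` with `‖μᵢ − μⱼ‖² ≤ 2LC/(L−1)`. -/
theorem robustness_upper_bound {V : Type*} [NormedAddCommGroup V]
    [InnerProductSpace ℝ V] (L : ℕ) (hL : 2 ≤ L) (C : ℝ) (hC : 0 < C)
    (μ : Fin L → V) (hsum : ∑ i, μ i = 0) (hnorm : ∀ i, ‖μ i‖ ^ 2 ≤ C) :
    sInf {d : ℝ | ∃ i j : Fin L, i ≠ j ∧ d = ‖μ i - μ j‖} / 2 ≤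
        Real.sqrt ((L : ℝ) * C / (2 * (L - 1))) ∧
      ∃ i j : Fin L, i ≠ j ∧ ‖μ i - μ j‖ ^ 2 ≤ 2 * L * C / (L - 1) := by
  have hL' : (2 : ℝ) ≤ L := by exact_mod_cast hL
  have hL1 : (0 : ℝ) < L - 1 := by linarith
  have key : ∃ i j : Fin L, i ≠ j ∧ ‖μ i - μ j‖ ^ 2 ≤ 2 * L * C / (L - 1) := by
    let a : Fin L := ⟨0, by omega⟩
    have hs : ∑ j, ‖μ a - μ j‖ ^ 2 ≤ 2 * L * C := by
      have h1 : ∑ j, ‖μ a - μ j‖ ^ 2 = L * ‖μ a‖ ^ 2 + ∑ j, ‖μ j‖ ^ 2 := by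
        simp_rw [norm_sub_sq_real]
        rw [Finset.sum_add_distrib, Finset.sum_sub_distrib, ← Finset.mul_sum, ← inner_sum, hsum]
        simp
      have h2 : ∑ j, ‖μ j‖ ^ 2 ≤ L * C := by
        calc ∑ j, ‖μ j‖ ^ 2 ≤ ∑ _j : Fin L, C := Finset.sum_le_sum fun j _ => hnorm j
          _ = L * C := by simp
      rw [h1]
      nlinarith [hnorm a]
    by_contra! hcon
    have h3 : ∑ j, ‖μ a - μ j‖ ^ 2 = ∑ j ∈ Finset.univ.erase a, ‖μ a - μ j‖ ^ 2 := by
      rw [← Finset.add_sum_erase Finset.univ _ (Finset.mem_univ a)]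
      simp
    have hcard : (Finset.univ.erase a).card = L - 1 := by
      rw [Finset.card_erase_of_mem (Finset.mem_univ a)]; simp
    have h4 : ∑ _j ∈ Finset.univ.erase a, 2 * L * C / ((L : ℝ) - 1)
        < ∑ j ∈ Finset.univ.erase a, ‖μ a - μ j‖ ^ 2 := by
      apply Finset.sum_lt_sum_of_nonempty
      · rw [← Finset.card_pos, hcard]; omega
      · intro j hj
        exact hcon a j (Finset.ne_of_mem_erase hj).symm
    rw [Finset.sum_const, hcard, nsmul_eq_mul, Nat.cast_sub (by omega), Nat.cast_one,
      mul_div_cancel₀ _ hL1.ne'] at h4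
    linarith
  refine ⟨?_, key⟩
  obtain ⟨i, j, hij, h⟩ := key
  have hle : sInf {d : ℝ | ∃ i j : Fin L, i ≠ j ∧ d = ‖μ i - μ j‖} ≤ ‖μ i - μ j‖ := by
    apply csInf_le
    · refine ⟨0, ?_⟩
      rintro d ⟨i, j, _, rfl⟩
      positivity
    · exact ⟨i, j, hij, rfl⟩
  refine (div_le_div_of_nonneg_right hle (by norm_num)).trans ?_
  apply Real.le_sqrt_of_sq_le
  have h5 : (L : ℝ) * C / (2 * (L - 1)) = (2 * L * C / (L - 1)) / 4 := by
    field_simp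
    norm_num
  rw [h5, div_pow]
  linarith
end

section
/- Let L ≥ 2, let C > 0, and let μ₁, …, μ_L be vectors in a real inner product space satisfying Σ_{i=1}^{L} μᵢ = 0 and max_{i} ‖μᵢ‖² = C. Then min_{i ≠ j} ‖μᵢ − μⱼ‖ / 2 = √(LC / (2(L−1))) holds if and only if the Gram condition holds: ⟨μᵢ, μⱼ⟩ = C for all i = j, and ⟨μᵢ, μⱼ⟩ = C/(1−L) for all i ≠ j. -/
open scoped RealInnerProductSpace

/-- Let `L ≥ 2`, `C > 0` and `μ₁, …, μ_L` be vectors in a real inner product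
space with `Σᵢ μᵢ = 0` and `maxᵢ ‖μᵢ‖² = C`. Then the approximated robustness
`min_{i≠j} ‖μᵢ − μⱼ‖/2` attains the upper bound `√(LC/(2(L−1)))` if and only
if the Gram condition holds: `⟨μᵢ, μⱼ⟩ = C` for `i = j` and
`⟨μᵢ, μⱼ⟩ = C/(1−L)` for `i ≠ j`. -/
theorem robustness_eq_upper_bound_iff_gram {V : Type*} [NormedAddCommGroup V]
    [InnerProductSpace ℝ V] (L : ℕ) (hL : 2 ≤ L) (C : ℝ) (hC : 0 < C)
    (μ : Fin L → V) (hsum : ∑ i, μ i = 0)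
    (hmax : (⨆ i, ‖μ i‖ ^ 2) = C) :
    sInf {d : ℝ | ∃ i j : Fin L, i ≠ j ∧ d = ‖μ i - μ j‖} / 2 =
        Real.sqrt ((L : ℝ) * C / (2 * (L - 1))) ↔
      ∀ i j : Fin L, ⟪μ i, μ j⟫ = if i = j then C else C / (1 - L) := by
  have hL2 : (2 : ℝ) ≤ L := by exact_mod_cast hL
  have hL1 : (0 : ℝ) < (L : ℝ) - 1 := by linarith
  have hle : ∀ i, ‖μ i‖ ^ 2 ≤ C := fun i => by
    rw [← hmax]
    exact le_ciSup (f := fun i => ‖μ i‖ ^ 2) (Set.finite_range _).bddAbove i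
  have hDnn : 0 ≤ (L : ℝ) * C / (2 * (L - 1)) := by positivity
  have hexp : ∀ i j, ‖μ i - μ j‖ ^ 2 = ‖μ i‖ ^ 2 - 2 * ⟪μ i, μ j⟫ + ‖μ j‖ ^ 2 :=
    fun i j => norm_sub_sq_real _ _
  have hD4 : (2 * Real.sqrt ((L : ℝ) * C / (2 * (L - 1)))) ^ 2 = 2 * L * C / (L - 1) := by
    rw [mul_pow, Real.sq_sqrt hDnn]
    field_simp
  constructor
  · intro h
    have hlow : ∀ i j, (if i = j then 0 else 2 * L * C / ((L : ℝ) - 1)) ≤ ‖μ i - μ j‖ ^ 2 := by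
      intro i j
      split_ifs with hij
      · positivity
      · rw [← hD4, ← h]
        have h1 : sInf {d : ℝ | ∃ i j : Fin L, i ≠ j ∧ d = ‖μ i - μ j‖} ≤ ‖μ i - μ j‖ := by
          apply csInf_le
          · refine ⟨0, ?_⟩
            rintro d ⟨a, b, _, rfl⟩
            positivity
          · exact ⟨i, j, hij, rfl⟩
        have h2 := Real.sqrt_nonneg ((L : ℝ) * C / (2 * (L - 1)))
        rw [← h] at h2
        apply pow_le_pow_left₀ <;> linarith
    have hfs : ∀ i : Fin L,
        ∑ j, (if i = j then 0 else 2 * L * C / ((L : ℝ) - 1)) = 2 * L * C := by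
      intro i
      have : ∀ j, (if i = j then 0 else 2 * L * C / ((L : ℝ) - 1)) =
          2 * L * C / ((L : ℝ) - 1) - (if i = j then 2 * L * C / ((L : ℝ) - 1) else 0) := by
        intro j
        split_ifs <;> simp
      simp only [this, Finset.sum_sub_distrib, Finset.sum_ite_eq, Finset.mem_univ, if_true,
        Finset.sum_const, Finset.card_univ, Fintype.card_fin, nsmul_eq_mul]
      field_simp
    have hns : ∀ i, ∑ j, ‖μ i - μ j‖ ^ 2 = L * ‖μ i‖ ^ 2 + ∑ j, ‖μ j‖ ^ 2 := by
      intro i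
      simp only [hexp, Finset.sum_add_distrib, Finset.sum_sub_distrib, ← Finset.mul_sum,
        ← inner_sum, hsum, inner_zero_right]
      simp
    have hS : ∑ j, ‖μ j‖ ^ 2 ≤ L * C := by
      have := Finset.sum_le_sum (fun j (_ : j ∈ Finset.univ) => hle j)
      simpa using this
    have hge : ∀ i, 2 * L * C ≤ L * ‖μ i‖ ^ 2 + ∑ j, ‖μ j‖ ^ 2 := by
      intro i
      rw [← hns, ← hfs i]
      exact Finset.sum_le_sum fun j _ => hlow i j
    have hn : ∀ i, ‖μ i‖ ^ 2 = C := by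
      intro i
      refine le_antisymm (hle i) ?_
      have := hge i
      have h3 : L * C ≤ L * ‖μ i‖ ^ 2 := by linarith
      exact le_of_mul_le_mul_left h3 (by linarith)
    have heq : ∀ i j, (if i = j then 0 else 2 * L * C / ((L : ℝ) - 1)) = ‖μ i - μ j‖ ^ 2 := by
      intro i j
      refine (Finset.sum_eq_sum_iff_of_le fun j _ => hlow i j).1 ?_ j (Finset.mem_univ j)
      rw [hfs, hns]
      simp only [hn]
      simp
      ring
    intro i j
    split_ifs with hij
    · subst hij
      rw [real_inner_self_eq_norm_sq, hn]
    · have h4 := heq i j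
      rw [if_neg hij, hexp, hn, hn] at h4
      have h5 : (1 : ℝ) - L ≠ 0 := by linarith
      have h6 : (L : ℝ) - 1 ≠ 0 := by linarith
      rw [eq_div_iff h5]
      rw [div_eq_iff h6] at h4
      linarith
  · intro h
    have hn : ∀ i, ‖μ i‖ ^ 2 = C := fun i => by
      rw [← real_inner_self_eq_norm_sq, h, if_pos rfl]
    have hd : ∀ i j, i ≠ j → ‖μ i - μ j‖ = 2 * Real.sqrt ((L : ℝ) * C / (2 * (L - 1))) := by
      intro i j hij
      rw [← sq_eq_sq₀ (norm_nonneg _) (by positivity), hD4, hexp, hn, hn, h, if_neg hij]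
      have h5 : (1 : ℝ) - L ≠ 0 := by linarith
      have h6 : (L : ℝ) - 1 ≠ 0 := by linarith
      have h7 : C / (1 - (L : ℝ)) = - (C / (L - 1)) := by
        rw [← div_neg, neg_sub]
      rw [h7]
      field_simp
      ring
    have hset : {d : ℝ | ∃ i j : Fin L, i ≠ j ∧ d = ‖μ i - μ j‖} =
        {2 * Real.sqrt ((L : ℝ) * C / (2 * (L - 1)))} := by
      ext d
      simp only [Set.mem_ofPred_eq, Set.mem_singleton_iff]
      constructor
      · rintro ⟨i, j, hij, rfl⟩
        exact hd i j hij
      · rintro rfl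
        have hne : (⟨0, by omega⟩ : Fin L) ≠ ⟨1, by omega⟩ := by simp
        exact ⟨_, _, hne, (hd _ _ hne).symm⟩
    rw [hset, csInf_singleton]
    ring
end
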